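/- Let n be a prime number, and in S_{2n} let ρ be the involution pairing 2k with 2k+1, and let C'_ρ be the subgroup of S_{2n} consisting of permutations that commute with ρ and map even elements to even elements (a subgroup isomorphic to S_n, of order n!). Then the number N of orbits of C'_ρ acting by conjugation on the set of 2n-cycles of S_{2n} satisfies N = n − 1 + (2n−1)!/n!; equivalently, N·n! = (n−1)·n! + (2n−1)!. -/

import Mathlib

/-- The fixed-point-free involution of `Fin (2n)` pairing `2k` with `2k+1`. -/
def rho (n : ℕ) : Equiv.Perm (Fin (2 * n)) :=
  Function.Involutive.toPerm
    (fun x => ⟨if x.val % 2 = 0 then x.val + 1 else x.val - 1, by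
      have := x.isLt; split_ifs with h <;> omega⟩)
    (by
      intro x
      have hx := x.isLt
      apply Fin.ext
      dsimp only
      split_ifs <;> omega)

/-- The subgroup `C'_ρ` (as a set): permutations commuting with ρ and preserving
parity of labels; it is isomorphic to `S_n`. -/
def CrhoPrime (n : ℕ) : Set (Equiv.Perm (Fin (2 * n))) :=
  {γ | γ * rho n = rho n * γ ∧
       ∀ x : Fin (2 * n), Even (x : ℕ) ↔ Even ((γ x : Fin (2 * n)) : ℕ)}

open Equiv Equiv.Perm

section general
variable {α : Type*} [Fintype α] [DecidableEq α]

lemma full_sameCycle {m : ℕ} (hm : Fintype.card α = m) {c : Perm α}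
    (hc : c.cycleType = {m}) (x y : α) : ∃ k : ℕ, (c ^ k) x = y := by
  have hcyc : c.IsCycle := by
    rw [← card_cycleType_eq_one, hc]; simp
  have hs : c.support = Finset.univ := by
    rw [← Finset.card_eq_iff_eq_univ, ← sum_cycleType, hc, hm]; simp
  have hx : ∀ z, c z ≠ z := fun z => by rw [← mem_support, hs]; simp
  exact hcyc.exists_pow_eq (hx x) (hx y)

lemma commute_mem {m : ℕ} (hm : Fintype.card α = m) [Nonempty α] {c g : Perm α}
    (hc : c.cycleType = {m}) (h : Commute g c) : g ∈ Subgroup.zpowers c := by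
  obtain ⟨x0⟩ := ‹Nonempty α›
  obtain ⟨i, hi⟩ := full_sameCycle hm hc x0 (g x0)
  refine ⟨i, ?_⟩
  ext y
  obtain ⟨j, rfl⟩ := full_sameCycle hm hc x0 y
  have h1 : g ((c ^ j) x0) = (c ^ j) (g x0) := by
    have := (h.pow_right j).eq
    exact congrArg (fun f : Perm α => f x0) this
  rw [h1, ← hi]
  simp only [zpow_natCast, ← Perm.mul_apply, ← pow_add, add_comm]

lemma commute_free {m : ℕ} (hm : Fintype.card α = m) {c g : Perm α}
    (hc : c.cycleType = {m}) (h : Commute g c) (x : α) (hx : g x = x) : g = 1 := by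
  ext y
  obtain ⟨j, rfl⟩ := full_sameCycle hm hc x y
  have h1 : g ((c ^ j) x) = (c ^ j) (g x) := by
    have := (h.pow_right j).eq
    exact congrArg (fun f : Perm α => f x) this
  rw [h1, hx]; rfl

lemma orderOf_dvd_card_of_free (s : Perm α) (h : ∀ (k : ℕ) (x : α), (s ^ k) x = x → s ^ k = 1) :
    orderOf s ∣ Fintype.card α := by
  by_cases h1 : s = 1
  · simp [h1]
  have hs : s.support = Finset.univ := by
    ext x
    simp only [mem_support, Finset.mem_univ, iff_true]
    intro hx
    exact h1 (by simpa using h 1 x (by simpa using hx))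
  have : Fintype.card α = s.cycleType.sum := by
    rw [sum_cycleType, hs, Finset.card_univ]
  rw [this]
  apply Multiset.dvd_sum
  intro l hl
  obtain ⟨c, t, rfl, hd, hc, hl⟩ := mem_cycleType_iff.1 hl
  obtain ⟨x, hx, -⟩ := id hc
  have htx : t x = x := (hd x).resolve_left hx
  apply orderOf_dvd_of_pow_eq_one
  apply h l x
  rw [hd.commute.mul_pow, ← hl, ← hc.orderOf, pow_orderOf_eq_one, one_mul]
  exact pow_apply_eq_self_of_apply_eq_self htx _

lemma cycleType_of_prime_free {n : ℕ} (hp : n.Prime) {s : Perm α} (k : ℕ)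
    (hk : Fintype.card α = k * n) (ho : orderOf s = n) (hf : ∀ x, s x ≠ x) :
    s.cycleType = Multiset.replicate k n := by
  obtain ⟨j, hj⟩ := cycleType_prime_order (σ := s) (ho ▸ hp)
  rw [ho] at hj
  have hs : s.support = Finset.univ := by
    ext x; simp [hf]
  have : Fintype.card α = s.cycleType.sum := by
    rw [sum_cycleType, hs, Finset.card_univ]
  rw [hj, hk, Multiset.sum_replicate, smul_eq_mul] at this
  rw [hj, Nat.eq_of_mul_eq_mul_right hp.pos this]

open Finset Classical in
/-- double counting -/
lemma count_commuting {n : ℕ} (hp : n.Prime) (hm : Fintype.card α = 2 * n) (g : Perm α)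
    (hg : g.cycleType = {n, n}) :
    #{c : Perm α | c.cycleType = {2 * n} ∧ Commute g c} = n * (n - 1) := by
  classical
  have hne : Nonempty α := by
    rw [← Fintype.card_pos_iff, hm]; have := hp.pos; omega
  -- per cycle
  have hA : ∀ c : Perm α, c.cycleType = {2 * n} →
      #{h : Perm α | h.cycleType = {n, n} ∧ Commute h c} = n - 1 := by
    intro c hc
    have hoc : orderOf c = 2 * n := by rw [← lcm_cycleType, hc]; simp
    have key : #{z : Subgroup.zpowers c | orderOf z = n} = Nat.totient n := by
      apply IsCyclic.card_orderOf_eq_totient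
      rw [Fintype.card_zpowers, hoc]; exact Dvd.intro_left _ rfl
    rw [Nat.totient_prime hp] at key
    rw [← key]
    symm
    apply Finset.card_bij (fun (z : Subgroup.zpowers c) _ => (z : Perm α))
    · rintro ⟨z, hz⟩ h
      simp only [mem_filter, mem_univ, true_and, Subgroup.orderOf_mk] at h ⊢
      have hcom : Commute z c := by
        obtain ⟨i, rfl⟩ := hz
        exact (Commute.refl c).zpow_left i
      refine ⟨cycleType_of_prime_free hp 2 hm h fun x hx => ?_, hcom⟩
      have := commute_free hm hc hcom x hx
      rw [this, orderOf_one] at h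
      exact hp.one_lt.ne h
    · intro a _ b _ h; exact Subtype.ext h
    · intro h hh
      simp only [mem_filter, mem_univ, true_and] at hh
      refine ⟨⟨h, commute_mem hm hc hh.2⟩, ?_, rfl⟩
      simp only [mem_filter, mem_univ, true_and, Subgroup.orderOf_mk]
      rw [← lcm_cycleType, hh.1]
      simp
  have hB : ∀ h : Perm α, h.cycleType = {n, n} →
      #{c : Perm α | c.cycleType = {2 * n} ∧ Commute h c} =
      #{c : Perm α | c.cycleType = {2 * n} ∧ Commute g c} := by
    intro h hh
    obtain ⟨t, ht⟩ := isConj_iff.1 (isConj_of_cycleType_eq (hh.trans hg.symm))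
    apply Finset.card_bij (fun c _ => t * c * t⁻¹)
    · intro c
      simp only [mem_filter, mem_univ, true_and, cycleType_conj]
      rintro ⟨h1, h2⟩
      refine ⟨h1, ?_⟩
      rw [← ht]
      have h3 := h2.eq
      show t * h * t⁻¹ * (t * c * t⁻¹) = t * c * t⁻¹ * (t * h * t⁻¹)
      calc _ = t * (h * c) * t⁻¹ := by group
        _ = _ := by rw [h3]; group
    · intro a _ b _ hab; simpa using hab
    · intro c
      simp only [mem_filter, mem_univ, true_and]
      rintro ⟨h1, h2⟩
      refine ⟨t⁻¹ * c * t, ⟨?_, ?_⟩, by group⟩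
      · rw [← h1]; simpa using cycleType_conj (σ := c) (τ := t⁻¹)
      · rw [← ht] at h2
        have h3 : t * h * t⁻¹ * c = c * (t * h * t⁻¹) := h2.eq
        show h * (t⁻¹ * c * t) = t⁻¹ * c * t * h
        calc _ = t⁻¹ * (t * h * t⁻¹ * c) * t := by group
          _ = _ := by rw [h3]; group
  have hD := Finset.sum_card_bipartiteAbove_eq_sum_card_bipartiteBelow
    (s := ({h : Perm α | h.cycleType = {n, n}} : Finset (Perm α)))
    (t := ({c : Perm α | c.cycleType = {2 * n}} : Finset (Perm α)))
    (fun h c => Commute h c)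
  simp only [Finset.bipartiteAbove, Finset.bipartiteBelow, Finset.filter_filter] at hD
  rw [Finset.sum_congr rfl (fun h hh => hB h (by simpa using hh)),
    Finset.sum_congr rfl (fun c hc => hA c (by simpa using hc))] at hD
  simp only [sum_const, smul_eq_mul] at hD
  have h1 := card_of_cycleType_mul_eq α ({n, n})
  have h2 := card_of_cycleType_mul_eq α {2 * n}
  have hn2 := hp.two_le
  rw [if_pos ⟨by simp [hm, two_mul], by simp [hn2]⟩] at h1
  rw [if_pos ⟨by simp [hm], by intro a ha; rw [Multiset.mem_singleton.1 ha]; omega⟩] at h2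
  simp [hm, ← two_mul] at h1 h2
  set F := #{c : Perm α | c.cycleType = {2 * n} ∧ Commute g c}
  set A := #{h : Perm α | h.cycleType = {n, n}}
  set B := #{c : Perm α | c.cycleType = {2 * n}}
  have hApos : 0 < A := Finset.card_pos.2 ⟨g, by simpa using hg⟩
  have e : A * (n * n * 2) = B * (2 * n) := by rw [h2]; convert h1; rfl
  have e' : A * n = B := by
    have : (A * n) * (2 * n) = B * (2 * n) := by rw [← e]; ring
    exact Nat.eq_of_mul_eq_mul_right (by omega) this
  rw [← e'] at hD
  exact Nat.eq_of_mul_eq_mul_left hApos (by rw [hD]; ring)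

end general

/-- the coordinates `(k, b) ↦ 2k + b` -/
def eqv (n : ℕ) : Fin n × Fin 2 ≃ Fin (2 * n) :=
  finProdFinEquiv.trans (finCongr (Nat.mul_comm n 2))

lemma eqv_val (n : ℕ) (k : Fin n) (b : Fin 2) : (eqv n (k, b) : ℕ) = b + 2 * k := rfl

/-- doubling of a permutation -/
def dbl (n : ℕ) : Perm (Fin n) →* Perm (Fin (2 * n)) where
  toFun s := (eqv n).permCongr (s.prodCongr (Equiv.refl _))
  map_one' := by ext x; simp [Equiv.permCongr_apply]
  map_mul' s t := by
    apply Equiv.ext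
    intro x
    obtain ⟨⟨k, b⟩, rfl⟩ := (eqv n).surjective x
    simp [Equiv.permCongr_apply]

lemma dbl_apply (n : ℕ) (s : Perm (Fin n)) (k : Fin n) (b : Fin 2) :
    dbl n s (eqv n (k, b)) = eqv n (s k, b) := by
  simp [dbl, Equiv.permCongr_apply]

lemma dbl_injective (n : ℕ) : Function.Injective (dbl n) := by
  intro s t h
  ext k
  have := congrArg (fun f : Perm _ => f (eqv n (k, 0))) h
  simp only [dbl_apply] at this
  have := (eqv n).injective this
  simpa using congrArg (fun p : Fin n × Fin 2 => (p.1 : ℕ)) this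

lemma rho_zero (n : ℕ) (k : Fin n) : rho n (eqv n (k, 0)) = eqv n (k, 1) := by
  apply Fin.ext
  simp [rho, Function.Involutive.toPerm, eqv_val]
  omega

lemma rho_one (n : ℕ) (k : Fin n) : rho n (eqv n (k, 1)) = eqv n (k, 0) := by
  apply Fin.ext
  simp [rho, Function.Involutive.toPerm, eqv_val]

lemma mem_Crho_iff (n : ℕ) (g : Perm (Fin (2 * n))) :
    g ∈ CrhoPrime n ↔ ∃ s, dbl n s = g := by
  constructor
  · rintro ⟨h1, h2⟩
    have h0 : ∀ k, ∃ j, g (eqv n (k, 0)) = eqv n (j, 0) := by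
      intro k
      obtain ⟨⟨j, b⟩, hj⟩ := (eqv n).surjective (g (eqv n (k, 0)))
      have := (h2 (eqv n (k, 0))).1 (by simp [eqv_val])
      rw [← hj, eqv_val] at this
      refine ⟨j, ?_⟩
      rw [← hj]
      fin_cases b
      · rfl
      · exfalso; revert this; simp [Nat.even_add]
    choose f hf using h0
    have hinj : Function.Injective f := by
      intro a b hab
      have : g (eqv n (a, 0)) = g (eqv n (b, 0)) := by rw [hf, hf, hab]
      have := (eqv n).injective (g.injective this)
      exact congrArg Prod.fst this
    refine ⟨Equiv.ofBijective f (Finite.injective_iff_bijective.1 hinj), ?_⟩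
    apply Equiv.ext
    intro x
    obtain ⟨⟨k, b⟩, rfl⟩ := (eqv n).surjective x
    rw [dbl_apply]
    fin_cases b
    · exact (hf k).symm
    · show eqv n (f k, 1) = g (eqv n (k, 1))
      rw [← rho_zero, ← rho_zero, ← hf]
      exact (congrArg (fun q : Perm _ => q (eqv n (k, 0))) h1).symm
  · rintro ⟨s, rfl⟩
    constructor
    · apply Equiv.ext
      intro x
      obtain ⟨⟨k, b⟩, rfl⟩ := (eqv n).surjective x
      fin_cases b
      · simp [rho_zero, dbl_apply]
      · simp [rho_one, dbl_apply]
    · intro x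
      obtain ⟨⟨k, b⟩, rfl⟩ := (eqv n).surjective x
      rw [dbl_apply, eqv_val, eqv_val]
      simp [Nat.even_add]

/-- the set of full cycles -/
abbrev FC (n : ℕ) := {π : Perm (Fin (2 * n)) // π.cycleType = {2 * n}}

/-- conjugation action through `dbl` -/
@[reducible]
def act (n : ℕ) : MulAction (Perm (Fin n)) (FC n) where
  smul s π := ⟨dbl n s * π * (dbl n s)⁻¹, by rw [cycleType_conj, π.2]⟩
  one_smul π := Subtype.ext (by
    show dbl n 1 * π * (dbl n 1)⁻¹ = π
    simp)
  mul_smul s t π := Subtype.ext (by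
    show dbl n (s * t) * π * (dbl n (s * t))⁻¹ = dbl n s * (dbl n t * π * (dbl n t)⁻¹) * (dbl n s)⁻¹
    rw [map_mul]; group)

lemma dbl_fix {n : ℕ} (s : Perm (Fin n)) (x : Fin (2 * n)) (hx : dbl n s x = x) : ∃ k, s k = k := by
  obtain ⟨⟨k, b⟩, rfl⟩ := (eqv n).surjective x
  rw [dbl_apply] at hx
  exact ⟨k, congrArg Prod.fst ((eqv n).injective hx)⟩

open Finset Classical in
lemma fix_count {n : ℕ} (hp : n.Prime) (s : Perm (Fin n)) :
    #{c : Perm (Fin (2 * n)) | c.cycleType = {2 * n} ∧ Commute (dbl n s) c} =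
      (if s = 1 then (2 * n - 1).factorial else 0) +
      (if s.cycleType = {n} then n * (n - 1) else 0) := by
  have hn2 := hp.two_le
  split_ifs with h1 h2 h2
  · subst h1; simp at h2
  · subst h1
    have h := card_of_cycleType_mul_eq (Fin (2 * n)) {2 * n}
    rw [if_pos ⟨by simp, by intro a ha; rw [Multiset.mem_singleton.1 ha]; omega⟩] at h
    simp at h
    simp only [map_one, Commute.one_left, and_true, add_zero]
    rw [← Nat.mul_factorial_pred (show 2 * n ≠ 0 by omega), mul_comm] at h
    exact Nat.eq_of_mul_eq_mul_left (by omega) h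
  · rw [zero_add]
    apply count_commuting hp (by simp)
    have hsup : s.support = univ := by
      rw [← Finset.card_eq_iff_eq_univ, ← sum_cycleType, h2]; simp
    have ho : orderOf (dbl n s) = n := by
      rw [orderOf_injective _ (dbl_injective n), ← lcm_cycleType, h2]; simp
    apply cycleType_of_prime_free hp 2 (by simp) ho
    intro x hx
    obtain ⟨k, hk⟩ := dbl_fix s x hx
    have : k ∈ s.support := by rw [hsup]; simp
    exact mem_support.1 this hk
  · rw [add_zero, card_eq_zero, filter_eq_empty_iff]
    rintro c - ⟨hc, hcom⟩
    have hfree : ∀ (k : ℕ) (x : Fin n), (s ^ k) x = x → s ^ k = 1 := by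
      intro k x hx
      apply dbl_injective n
      rw [map_one]
      apply commute_free (by simp) hc (by rw [map_pow]; exact hcom.pow_left k) (eqv n (x, 0))
      rw [dbl_apply, hx]
    have hd := orderOf_dvd_card_of_free s hfree
    rw [Fintype.card_fin, Nat.dvd_prime hp, orderOf_eq_one_iff] at hd
    have ho := hd.resolve_left h1
    apply h2
    have := cycleType_of_prime_free hp (s := s) 1 (by simp) ho (fun x hx => h1 (by
      simpa using hfree 1 x (by simpa using hx)))
    simpa using this

/-- For n prime, the number N of orbits of `C'_ρ` acting by conjugation on the
2n-cycles of the symmetric group on `Fin (2n)` satisfies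
`N·n! = (n−1)·n! + (2n−1)!`, i.e. `N = n − 1 + (2n−1)!/n!`. -/
theorem card_orbits_cyclic_of_prime (n : ℕ) (hp : Nat.Prime n) :
    Nat.card (Quot (fun π π' : {π : Equiv.Perm (Fin (2 * n)) // π.cycleType = {2 * n}} =>
        ∃ γ ∈ CrhoPrime n, (π' : Equiv.Perm (Fin (2 * n))) = γ * π * γ⁻¹))
        * n.factorial
      = (n - 1) * n.factorial + (2 * n - 1).factorial := by
  classical
  letI := act n
  have hsmul : ∀ (s : Perm (Fin n)) (π : FC n),
      ((s • π : FC n) : Perm (Fin (2 * n))) = dbl n s * π * (dbl n s)⁻¹ := fun _ _ => rfl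
  have hq : Nat.card (Quot (fun π π' : {π : Equiv.Perm (Fin (2 * n)) // π.cycleType = {2 * n}} =>
        ∃ γ ∈ CrhoPrime n, (π' : Equiv.Perm (Fin (2 * n))) = γ * π * γ⁻¹)) =
      Fintype.card (Quotient (MulAction.orbitRel (Perm (Fin n)) (FC n))) := by
    rw [← Nat.card_eq_fintype_card]
    apply Nat.card_congr
    apply Quot.congrRight
    intro a b
    show _ ↔ (MulAction.orbitRel (Perm (Fin n)) (FC n)) a b
    rw [Setoid.comm', MulAction.orbitRel_apply]
    constructor
    · rintro ⟨g, hg, h⟩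
      obtain ⟨s, rfl⟩ := (mem_Crho_iff n g).1 hg
      exact ⟨s, Subtype.ext h.symm⟩
    · rintro ⟨s, h⟩
      exact ⟨dbl n s, (mem_Crho_iff n _).2 ⟨s, rfl⟩, by rw [← h]; rfl⟩
  have hB := MulAction.sum_card_fixedBy_eq_card_orbits_mul_card_group (Perm (Fin n)) (FC n)
  rw [Fintype.card_perm, Fintype.card_fin] at hB
  rw [hq, ← hB]
  have hfix : ∀ s : Perm (Fin n), Fintype.card (MulAction.fixedBy (FC n) s) =
      (if s = 1 then (2 * n - 1).factorial else 0) +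
      (if s.cycleType = {n} then n * (n - 1) else 0) := by
    intro s
    rw [← fix_count hp s, ← Fintype.card_subtype]
    apply Fintype.card_congr
    refine (Equiv.subtypeEquivRight (fun π => ?_)).trans
      (Equiv.subtypeSubtypeEquivSubtypeInter (fun c : Perm (Fin (2 * n)) => c.cycleType = {2 * n})
        (fun c => Commute (dbl n s) c))
    rw [MulAction.mem_fixedBy, Subtype.ext_iff, hsmul, mul_inv_eq_iff_eq_mul]
    rfl
  rw [Finset.sum_congr rfl (fun s _ => hfix s), Finset.sum_add_distrib]
  have h := card_of_cycleType_mul_eq (Fin n) {n}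
  rw [if_pos ⟨by simp, by intro a ha; rw [Multiset.mem_singleton.1 ha]; exact hp.two_le⟩] at h
  simp at h
  simp only [Finset.sum_ite_eq', Finset.mem_univ, if_true, ← Finset.sum_filter, Finset.sum_const,
    smul_eq_mul]
  rw [← mul_assoc, h]
  simp [Finset.filter_eq', add_comm, mul_comm]
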